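/- Let G be a finite simple graph with maximum average degree mad(G) < 9/2 and maximum degree Δ(G) ≥ 9. Then χ_i(G) ≤ Δ(G) + 4. -/

import Mathlib

open SimpleGraph

/-- An incidence coloring of `G` with `n` colors, where `φ v u` is the color of the
incidence `(v, vu)` (meaningful when `G.Adj v u`): two distinct adjacent incidences
`(v, vu)` and `(w, wx)` receive distinct colors. Incidences `(v, e)` and `(w, f)` are
adjacent if `v = w`, or `e = f`, or the edge `vw` equals `e` or `f`. -/
def IsIncidenceColoring {V : Type*} (G : SimpleGraph V) {n : ℕ} (φ : V → V → Fin n) : Prop :=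
  ∀ ⦃v u w x : V⦄, G.Adj v u → G.Adj w x → (v, u) ≠ (w, x) →
    (v = w ∨ s(v, u) = s(w, x) ∨ s(v, w) = s(v, u) ∨ s(v, w) = s(w, x)) →
    φ v u ≠ φ w x

/-- `G` admits an incidence `(n, ℓ)`-coloring: an incidence coloring with `n` colors such
that for every vertex `v`, at most `ℓ` distinct colors appear on the incidences of the
form `(u, uv)` where `u` ranges over the neighbors of `v`. -/
def HasIncidenceColoring {V : Type*} (G : SimpleGraph V) (n ℓ : ℕ) : Prop :=
  ∃ φ : V → V → Fin n, IsIncidenceColoring G φ ∧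
    ∀ v : V, ({c : Fin n | ∃ u : V, G.Adj u v ∧ φ u v = c}).ncard ≤ ℓ

/-- The incidence chromatic number: the least `n` such that `G` admits an incidence
`n`-coloring. -/
noncomputable def incChromaticNumber {V : Type*} (G : SimpleGraph V) : ℕ :=
  sInf {n : ℕ | ∃ φ : V → V → Fin n, IsIncidenceColoring G φ}

/-- `mad(G) < q`: every nonempty subgraph `H` of `G` satisfies `2|E(H)| < q·|V(H)|`. -/
def MadLT {V : Type*} (G : SimpleGraph V) (q : ℝ) : Prop :=
  ∀ H : G.Subgraph, H.verts.Nonempty →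
    (2 * H.edgeSet.ncard : ℝ) < q * H.verts.ncard

/-!
The coloring is built by induction, restoring one vertex `v` at a time, under the stronger
invariant that at most four colors point into each vertex. Each neighbor `u` of `v` then has a
four-element set `S u` containing the colors pointing into `u`, from which `(v, vu)` may be colored,
and a disjoint set `P u` of `Δ + 1 - deg u` colors available for `(u, uv)`. Restoring `v` amounts
to choosing distinct colors from the sets `S u` that leave a color in every `P u`. This is possible
if `deg v ≤ 2`, if `deg v = 3` and some neighbor has degree less than `Δ`, or if `deg v = 4` and at
most one neighbor has degree greater than `Δ - 4`; redistributing the degrees shows that average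
degree less than `9 / 2` forces such a vertex when `Δ ≥ 9`.
-/

section

open Finset

variable {V C : Type*} {G : SimpleGraph V}

section Coloring

lemma isIncidenceColoring_iff {n : ℕ} {φ : V → V → Fin n} :
    IsIncidenceColoring G φ ↔ (∀ x, Set.InjOn (φ x) (G.neighborSet x)) ∧
      ∀ ⦃x y z⦄, G.Adj x y → G.Adj x z → φ y x ≠ φ x z := by
  refine ⟨fun h => ⟨fun x y hy z hz he => ?_, fun x y z hy hz => ?_⟩, ?_⟩
  · by_contra hne
    exact h hy hz (by simpa using hne) (Or.inl rfl) he
  · exact h hy.symm hz (by simp [hy.ne']) (by simp [Sym2.eq_swap])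
  · rintro ⟨hinj, hne⟩ v u w x hvu hwx hvw hadj he
    have := hvu.symm
    have := hwx.symm
    simp only [Set.InjOn, mem_neighborSet] at hinj
    simp only [Sym2.eq_iff] at hadj
    grind

lemma HasIncidenceColoring.incChromaticNumber_le {n ℓ : ℕ} (h : HasIncidenceColoring G n ℓ) :
    incChromaticNumber G ≤ n :=
  Nat.sInf_le ⟨h.choose, h.choose_spec.1⟩

lemma hasIncidenceColoring_bot (n ℓ : ℕ) [NeZero n] :
    HasIncidenceColoring (⊥ : SimpleGraph V) n ℓ :=
  ⟨fun _ _ => 0, fun _ _ _ _ h => h.elim, by simp⟩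

end Coloring

section FreeTransversal

variable {ι : Type*} [Fintype ι]

/-- An injective choice `c i ∈ S i` leaving in each `P i` some color that `c` does not use.
When a vertex `v` is put back, `ι` is its neighborhood, `c u` becomes the color of `(v, vu)`, and
the color left over in `P u` becomes that of `(u, uv)`. -/
def HasFreeTransversal {ι : Type*} (S P : ι → Finset C) : Prop :=
  ∃ c : ι → C, Function.Injective c ∧ (∀ i, c i ∈ S i) ∧ ∀ i, ∃ p ∈ P i, ∀ j, c j ≠ p

lemma exists_injective_of_card_le_card_add_one {t : ι → Finset C}
    (hle : ∀ i, Fintype.card ι ≤ #(t i) + 1) (hex : Nonempty ι → ∃ i, Fintype.card ι ≤ #(t i)) :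
    ∃ c : ι → C, Function.Injective c ∧ ∀ i, c i ∈ t i := by
  classical
  refine (all_card_le_biUnion_card_iff_exists_injective t).1 fun X => ?_
  have hsub (i : ι) (hi : i ∈ X) := card_le_card (subset_biUnion_of_mem t hi)
  rcases X.eq_empty_or_nonempty with rfl | ⟨i, hi⟩
  · simp
  rcases eq_or_ne X univ with rfl | hX
  · obtain ⟨j, hj⟩ := hex ⟨i⟩
    exact hj.trans (hsub j (mem_univ j))
  · have := (card_lt_iff_ne_univ X).2 hX
    have := hle i
    have := hsub i hi
    omega

lemma hasFreeTransversal_of_card_add_card_le {S P : ι → Finset C} {ℓ : ℕ}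
    (hS : ∀ i, ℓ ≤ #(S i)) (hP : ∀ i, (P i).Nonempty) (hSP : ∀ i, Disjoint (S i) (P i))
    (hι : Fintype.card ι ≤ ℓ)
    (hpoor : Fintype.card ι + #{i | #(P i) ≤ Fintype.card ι} ≤ ℓ + 1) :
    HasFreeTransversal S P := by
  classical
  choose a ha using hP
  -- `c` can exhaust only the sets `P i` with `i ∈ T`, so these reserve the color `a i`.
  set T : Finset ι := {i | #(P i) ≤ Fintype.card ι}
  have hcardT : #(T.image a) ≤ #T := card_image_le
  have hle (i : ι) : Fintype.card ι ≤ #(S i \ T.image a) + 1 := by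
    have := le_card_sdiff (T.image a) (S i)
    have := hS i
    omega
  have hex : Nonempty ι → ∃ i, Fintype.card ι ≤ #(S i \ T.image a) := by
    rintro ⟨i₀⟩
    rcases T.eq_empty_or_nonempty with hT | ⟨i, hi⟩
    · exact ⟨i₀, by simpa [hT] using hι.trans (hS i₀)⟩
    have haS : a i ∉ S i := disjoint_right.1 (hSP i) (ha i)
    have haT : a i ∈ T.image a := mem_image_of_mem a hi
    refine ⟨i, ?_⟩
    rw [← insert_erase haT, sdiff_insert_of_notMem haS]
    have := le_card_sdiff ((T.image a).erase (a i)) (S i)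
    have := card_erase_lt_of_mem haT
    have := hS i
    omega
  obtain ⟨c, hc, hcS⟩ := exists_injective_of_card_le_card_add_one hle hex
  refine ⟨c, hc, fun i => (mem_sdiff.1 (hcS i)).1, fun i => ?_⟩
  by_cases hi : i ∈ T
  · exact ⟨a i, ha i, fun j hj => (mem_sdiff.1 (hcS j)).2 (hj ▸ mem_image_of_mem a hi)⟩
  · have hrich : Fintype.card ι < #(P i) := by simpa [T] using hi
    obtain ⟨p, hp, hpc⟩ := exists_mem_notMem_of_card_lt_card (card_image_le.trans_lt hrich)
    exact ⟨p, hp, fun j hj => hpc (mem_image.2 ⟨j, mem_univ j, hj⟩)⟩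

lemma hasFreeTransversal_of_card_eq_three {S P : ι → Finset C} (hι : Fintype.card ι = 3)
    (hS : ∀ i, 4 ≤ #(S i)) (hP : ∀ i, (P i).Nonempty) (hSP : ∀ i, Disjoint (S i) (P i))
    (hrich : ∃ i, 2 ≤ #(P i)) : HasFreeTransversal S P := by
  classical
  choose a ha using hP
  obtain ⟨u, hu⟩ := hrich
  obtain ⟨v, w, -, hvw⟩ := card_eq_two.1 (show #(univ.erase u) = 2 by simp [card_univ, hι])
  have hcases (i : ι) : i = u ∨ i = v ∨ i = w := by
    have : i ∈ univ.erase u ↔ i = v ∨ i = w := by simp [hvw]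
    grind
  obtain ⟨Q, hQP, hQ⟩ := exists_subset_card_eq hu
  -- Making the color at `v` avoid both colors of `Q` leaves only the color at `w` to meet `Q`.
  obtain ⟨y, hy, hyn⟩ := exists_mem_notMem_of_card_lt_card (s := insert (a w) Q) (t := S v)
    (by have := card_insert_le (a w) Q; have := hS v; omega)
  obtain ⟨x, hx, hxn⟩ := exists_mem_notMem_of_card_lt_card (s := {a v, a w, y}) (t := S u)
    (card_le_three.trans_lt (hS u))
  obtain ⟨z, hz, hzn⟩ := exists_mem_notMem_of_card_lt_card (s := {a v, x, y}) (t := S w)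
    (card_le_three.trans_lt (hS w))
  obtain ⟨p, hp, hpz⟩ := exists_mem_ne (show 1 < #Q by omega) z
  have hdisj (i : ι) {s q : C} (hs : s ∈ S i) (hq : q ∈ P i) : s ≠ q :=
    disjoint_iff_ne.1 (hSP i) s hs q hq
  have hxp := hdisj u hx (hQP hp)
  have hya := hdisj v hy (ha v)
  have hza := hdisj w hz (ha w)
  simp only [mem_insert, mem_singleton, not_or] at hyn hxn hzn
  refine ⟨fun i => if i = u then x else if i = v then y else z, fun i j _ => ?_, fun i => ?_,
    fun i => ⟨if i = u then p else a i, ?_, fun j => ?_⟩⟩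
  · grind [hcases i, hcases j]
  · grind [hcases i]
  · grind
  · grind [hcases i, hcases j]

end FreeTransversal

section Extension

/-- The colors of the incidences `(u, uv)`, where `u` ranges over the neighbors of `v`. -/
def inColors (G : SimpleGraph V) (φ : V → V → C) (v : V) : Set C :=
  {c | ∃ u, G.Adj u v ∧ φ u v = c}

lemma IsIncidenceColoring.exists_palettes {k ℓ : ℕ} {φ : V → V → Fin (k + ℓ)}
    (hφ : IsIncidenceColoring G φ) (u : V) [Fintype (G.neighborSet u)] (hdeg : G.degree u ≤ k)
    (hin : (inColors G φ u).ncard ≤ ℓ) :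
    ∃ S P : Finset (Fin (k + ℓ)), #S = ℓ ∧ #P + G.degree u = k ∧ Disjoint S P ∧
      ∀ w, G.Adj u w → φ w u ∈ S ∧ φ u w ∉ S ∧ φ u w ∉ P := by
  classical
  rw [isIncidenceColoring_iff] at hφ
  set A := (G.neighborFinset u).image (φ u) with hA
  set B := (G.neighborFinset u).image (φ · u) with hB
  have hAcard : #A = G.degree u := card_image_of_injOn (by simpa using hφ.1 u)
  have hBcard : #B ≤ ℓ := by
    rw [← Set.ncard_coe_finset]
    refine (congrArg Set.ncard ?_).trans_le hin
    ext c
    simp [hB, inColors, G.adj_comm u]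
  have hAcompl : #Aᶜ = k + ℓ - G.degree u := by rw [card_compl, Fintype.card_fin, hAcard]
  have hBA : B ⊆ Aᶜ := fun c hcB => by
    simp only [hA, hB, mem_compl, mem_image, mem_neighborFinset] at hcB ⊢
    rintro ⟨z, hz, rfl⟩
    obtain ⟨y, hy, he⟩ := hcB
    exact hφ.2 hy hz he
  obtain ⟨S, hBS, hSA, hS⟩ := exists_subsuperset_card_eq hBA hBcard (by omega)
  have hA_mem (w : V) (hw : G.Adj u w) : φ u w ∉ Aᶜ := by
    simpa only [mem_compl, not_not] using
      mem_image_of_mem (φ u) ((G.mem_neighborFinset u w).2 hw)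
  refine ⟨S, Aᶜ \ S, hS, ?_, disjoint_sdiff, fun w hw => ⟨hBS ?_, fun h => hA_mem w hw (hSA h),
    fun h => hA_mem w hw (mem_sdiff.1 h).1⟩⟩
  · rw [card_sdiff_of_subset hSA]
    omega
  · exact mem_image_of_mem (φ · u) ((G.mem_neighborFinset u w).2 hw)

section ExtendColoring

variable [DecidableEq V]

/-- The coloring `φ` of a graph without edges at `v`, extended by the color `c u` on `(v, vu)`
and the color `a u` on `(u, uv)`. -/
def extendColoring (φ : V → V → C) (v : V) (c a : V → C) : V → V → C :=
  fun x y => if x = v then c y else if y = v then a x else φ x y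

lemma isIncidenceColoring_extendColoring {n : ℕ} {φ : V → V → Fin n} {v : V} {c a : V → Fin n}
    (hφ : IsIncidenceColoring (G.deleteIncidenceSet v) φ)
    (hc : Set.InjOn c (G.neighborSet v))
    (hca : ∀ u ∈ G.neighborSet v, ∀ w ∈ G.neighborSet v, c w ≠ a u)
    (hcφ : ∀ u ∈ G.neighborSet v, ∀ w, (G.deleteIncidenceSet v).Adj u w → φ u w ≠ c u)
    (haφ : ∀ u ∈ G.neighborSet v, ∀ w, (G.deleteIncidenceSet v).Adj u w →
      φ u w ≠ a u ∧ φ w u ≠ a u) :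
    IsIncidenceColoring G (extendColoring φ v c a) := by
  rw [isIncidenceColoring_iff] at hφ ⊢
  obtain ⟨hinj, hne⟩ := hφ
  simp only [deleteIncidenceSet_adj, mem_neighborSet, Set.InjOn] at *
  have hsymm := G.adj_comm
  have hirrefl := G.irrefl (v := v)
  constructor
  · intro x y hy z hz
    unfold extendColoring
    grind
  · intro x y z hy hz
    unfold extendColoring
    grind

lemma inColors_extendColoring_self_subset (φ : V → V → C) (v : V) (c a : V → C) :
    inColors G (extendColoring φ v c a) v ⊆ a '' G.neighborSet v := by
  rintro _ ⟨u, hu, rfl⟩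
  exact ⟨u, hu.symm, by simp [extendColoring, hu.ne]⟩

lemma inColors_extendColoring_subset (φ : V → V → C) {v x : V} (hx : x ≠ v) (c a : V → C) :
    inColors G (extendColoring φ v c a) x ⊆
      {k | G.Adj v x ∧ c x = k} ∪ inColors (G.deleteIncidenceSet v) φ x := by
  rintro _ ⟨u, hu, rfl⟩
  rcases eq_or_ne u v with rfl | huv
  · exact Or.inl ⟨hu, by simp [extendColoring]⟩
  · exact Or.inr ⟨u, deleteIncidenceSet_adj.2 ⟨hu, huv, hx⟩, by simp [extendColoring, huv, hx]⟩

lemma ncard_inColors_extendColoring_le [Finite C] {φ : V → V → C} {v : V} {c a : V → C} {ℓ : ℕ}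
    [Fintype (G.neighborSet v)] (hv : G.degree v ≤ ℓ)
    (hin : ∀ x, (inColors (G.deleteIncidenceSet v) φ x).ncard ≤ ℓ)
    (hS : ∀ u ∈ G.neighborSet v, ∃ S : Finset C, #S ≤ ℓ ∧ c u ∈ S ∧
      inColors (G.deleteIncidenceSet v) φ u ⊆ S) (x : V) :
    (inColors G (extendColoring φ v c a) x).ncard ≤ ℓ := by
  rcases eq_or_ne x v with rfl | hxv
  · refine (Set.ncard_le_ncard (inColors_extendColoring_self_subset φ x c a)).trans ?_
    refine (Set.ncard_image_le).trans ?_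
    rwa [Set.ncard_eq_toFinset_card', Set.toFinset_card, card_neighborSet_eq_degree]
  have hsub := inColors_extendColoring_subset (G := G) φ hxv c a
  by_cases hx : G.Adj v x
  · obtain ⟨S, hSℓ, hcS, hinS⟩ := hS x hx
    rw [← Set.ncard_coe_finset] at hSℓ
    refine (Set.ncard_le_ncard (hsub.trans (Set.union_subset ?_ hinS))).trans hSℓ
    rintro _ ⟨-, rfl⟩
    exact hcS
  · have hsub' := hsub.trans (Set.union_subset (by simp [hx]) subset_rfl)
    exact (Set.ncard_le_ncard hsub').trans (hin x)

end ExtendColoring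

lemma degree_deleteIncidenceSet_add_one {u v : V} [Fintype (G.neighborSet u)]
    [Fintype ((G.deleteIncidenceSet v).neighborSet u)] (h : G.Adj v u) :
    (G.deleteIncidenceSet v).degree u + 1 = G.degree u := by
  classical
  have : (G.deleteIncidenceSet v).neighborFinset u = (G.neighborFinset u).erase v := by
    ext w
    simp [deleteIncidenceSet_adj, h.ne', and_comm]
  rw [← card_neighborFinset_eq_degree, this,
    card_erase_add_one ((G.mem_neighborFinset u v).2 h.symm), card_neighborFinset_eq_degree]

variable [Fintype V] [DecidableRel G.Adj]

lemma HasIncidenceColoring.of_deleteIncidenceSet {k ℓ : ℕ} {v : V}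
    (h : HasIncidenceColoring (G.deleteIncidenceSet v) (k + ℓ) ℓ) (hv : G.degree v ≤ ℓ)
    (hk : G.maxDegree ≤ k)
    (hfree : ∀ S P : G.neighborSet v → Finset (Fin (k + ℓ)), (∀ u, #(S u) = ℓ) →
      (∀ u, #(P u) + G.degree u = k + 1) → (∀ u, Disjoint (S u) (P u)) →
      HasFreeTransversal S P) :
    HasIncidenceColoring G (k + ℓ) ℓ := by
  classical
  obtain ⟨φ, hφ, hin⟩ := h
  have hdeg (u : G.neighborSet v) := degree_deleteIncidenceSet_add_one u.2
  choose S P hS hP hSP hφSP using fun u : G.neighborSet v => hφ.exists_palettes u.1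
    (by have := G.degree_le_maxDegree u; have := hdeg u; omega) (hin u)
  obtain ⟨c, hc, hcS, hfree⟩ := hfree S P hS (fun u => by have := hP u; have := hdeg u; omega) hSP
  choose a haP hca using hfree
  have lift (f : G.neighborSet v → Fin (k + ℓ)) : ∃ g : V → Fin (k + ℓ), ∀ u, g u.1 = f u :=
    ⟨Function.extend Subtype.val f (φ v), Subtype.val_injective.extend_apply _ _⟩
  obtain ⟨c', hc'⟩ := lift c
  obtain ⟨a', ha'⟩ := lift a
  simp only [← hc', ← ha', Subtype.forall] at hcS hca haP hφSP
  refine ⟨extendColoring φ v c' a', isIncidenceColoring_extendColoring hφ ?_ hca ?_ ?_,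
    ncard_inColors_extendColoring_le hv hin fun u hu =>
      ⟨S ⟨u, hu⟩, (hS ⟨u, hu⟩).le, hcS u hu, ?_⟩⟩
  · intro u hu w hw he
    exact congrArg Subtype.val (@hc ⟨u, hu⟩ ⟨w, hw⟩ (by simpa only [← hc'] using he))
  · exact fun u hu w hw he => (hφSP u hu w hw).2.1 (he ▸ hcS u hu)
  · exact fun u hu w hw => ⟨fun he => (hφSP u hu w hw).2.2 (he ▸ haP u hu),
      disjoint_iff_ne.1 (hSP ⟨u, hu⟩) _ (hφSP u hu w hw).1 _ (haP u hu)⟩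
  · rintro _ ⟨w, hw, rfl⟩
    exact (hφSP u hu w hw.symm).1

lemma HasIncidenceColoring.of_deleteIncidenceSet_of_degree_add_card_le {k ℓ : ℕ} {v : V}
    (h : HasIncidenceColoring (G.deleteIncidenceSet v) (k + ℓ) ℓ) (hk : G.maxDegree ≤ k)
    (hv : G.degree v ≤ ℓ)
    (hheavy : G.degree v + #{u ∈ G.neighborFinset v | k < G.degree u + G.degree v} ≤ ℓ + 1) :
    HasIncidenceColoring G (k + ℓ) ℓ := by
  refine h.of_deleteIncidenceSet hv hk fun S P hS hP hSP => ?_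
  have hmax (u : G.neighborSet v) := (G.degree_le_maxDegree u).trans hk
  refine hasFreeTransversal_of_card_add_card_le (fun u => (hS u).ge)
    (fun u => card_pos.1 (by have := hP u; have := hmax u; omega)) hSP ?_ ?_ <;>
    rw [card_neighborSet_eq_degree]
  · exact hv
  · refine le_trans ?_ hheavy
    gcongr
    refine card_le_card_of_injOn Subtype.val (fun u hu => ?_) Subtype.val_injective.injOn
    simp only [coe_filter, mem_univ, true_and, Set.mem_ofPred_eq, mem_neighborFinset] at hu ⊢
    exact ⟨u.2, by have := hP u; omega⟩

lemma HasIncidenceColoring.of_deleteIncidenceSet_of_degree_eq_three {k ℓ : ℕ} {u v : V}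
    (h : HasIncidenceColoring (G.deleteIncidenceSet v) (k + ℓ) ℓ) (hk : G.maxDegree ≤ k)
    (hℓ : 4 ≤ ℓ) (hv : G.degree v = 3) (hvu : G.Adj v u) (hu : G.degree u < k) :
    HasIncidenceColoring G (k + ℓ) ℓ := by
  refine h.of_deleteIncidenceSet (by omega) hk fun S P hS hP hSP => ?_
  have hmax (u : G.neighborSet v) := (G.degree_le_maxDegree u).trans hk
  exact hasFreeTransversal_of_card_eq_three (by rw [card_neighborSet_eq_degree, hv])
    (fun u => hℓ.trans (hS u).ge)
    (fun u => card_pos.1 (by have := hP u; have := hmax u; omega)) hSP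
    ⟨⟨u, hvu⟩, by have := hP ⟨u, hvu⟩; simp only at this; omega⟩

end Extension

section Discharging

lemma MadLT.mono {H : SimpleGraph V} {q : ℝ} (hG : MadLT G q) (h : H ≤ G) : MadLT H q :=
  fun K hK => hG ⟨K.verts, K.Adj, fun hab => h (K.adj_sub hab), K.edge_vert, K.symm⟩ hK

variable [Fintype V] [DecidableRel G.Adj]

lemma MadLT.sum_degree_support_lt {q : ℝ} (hG : MadLT G q) (hne : G ≠ ⊥) :
    ∑ v ∈ G.support, (G.degree v : ℝ) < q * #G.support.toFinset := by
  obtain ⟨a, b, hab⟩ := ne_bot_iff_exists_adj.1 hne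
  have h := hG ⟨G.support, G.Adj, id, fun hab => ⟨_, hab⟩, G.symm⟩ ⟨a, b, hab⟩
  have hedges : (G.edgeSet.ncard : ℝ) = #G.edgeFinset := by
    rw [← coe_edgeFinset, Set.ncard_coe_finset]
  have hsum : (∑ v ∈ G.support, (G.degree v : ℝ)) = 2 * G.edgeSet.ncard := by
    rw [hedges]
    exact_mod_cast G.sum_degrees_support_eq_twice_card_edges
  rw [hsum, ← Set.ncard_eq_toFinset_card']
  exact h

lemma sum_support_sum_neighborFinset_comm {M : Type*} [AddCommMonoid M]
    (f : V → V → M) :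
    ∑ v ∈ G.support, ∑ u ∈ G.neighborFinset v, f u v =
      ∑ v ∈ G.support, ∑ u ∈ G.neighborFinset v, f v u :=
  sum_comm' fun v u => by
    simp only [Set.mem_toFinset, mem_support, mem_neighborFinset]
    exact ⟨fun h => ⟨h.2.symm, v, h.2.symm⟩, fun h => ⟨⟨u, h.1.symm⟩, h.1.symm⟩⟩

lemma MadLT.exists_charge_lt {q : ℝ} (hG : MadLT G q) (hne : G ≠ ⊥) (w : V → V → ℝ) :
    ∃ v ∈ G.support, G.degree v + ∑ u ∈ G.neighborFinset v, (w u v - w v u) < q := by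
  classical
  by_contra! hcon
  have hsum : ∑ _v ∈ G.support, q ≤
      ∑ v ∈ G.support, (G.degree v + ∑ u ∈ G.neighborFinset v, (w u v - w v u)) :=
    sum_le_sum fun _ hv => hcon _ (Set.mem_toFinset.1 hv)
  simp only [sum_add_distrib, sum_sub_distrib, sum_support_sum_neighborFinset_comm w, sub_self,
    add_zero, sum_const, nsmul_eq_mul] at hsum
  linarith [hG.sum_degree_support_lt hne]

/-- The charge that a vertex of degree `d` sends to each neighbor of degree `e`, when every vertex
starts with its degree as charge. -/
noncomputable def sentCharge (d e : ℕ) : ℝ :=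
  if 5 ≤ e then 0 else if 9 ≤ d then 1 / 2 else if 6 ≤ d then 1 / 4 else 0

lemma sentCharge_nonneg (d e : ℕ) : 0 ≤ sentCharge d e := by
  unfold sentCharge
  split_ifs <;> norm_num

lemma sentCharge_eq_zero_of_lt {d : ℕ} (hd : d < 6) (e : ℕ) : sentCharge d e = 0 := by
  simp [sentCharge, show ¬ 9 ≤ d by omega, show ¬ 6 ≤ d by omega]

lemma mul_sentCharge_le {d : ℕ} (hd : 5 ≤ d) (e : ℕ) : d * sentCharge d e ≤ d - 9 / 2 := by
  have hd' : (5 : ℝ) ≤ d := by exact_mod_cast hd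
  unfold sentCharge
  split_ifs with he h9 h6
  · linarith
  · have : (9 : ℝ) ≤ d := by exact_mod_cast h9
    linarith
  · have : (6 : ℝ) ≤ d := by exact_mod_cast h6
    linarith
  · linarith

lemma nine_halves_le_charge_of_five_le_degree {v : V} (hv : 5 ≤ G.degree v) :
    9 / 2 ≤ (G.degree v : ℝ) + ∑ u ∈ G.neighborFinset v,
      (sentCharge (G.degree u) (G.degree v) - sentCharge (G.degree v) (G.degree u)) := by
  have hreceived (u : V) : sentCharge (G.degree u) (G.degree v) = 0 := if_pos hv
  have hpos : (0 : ℝ) < G.degree v := by exact_mod_cast (show 0 < G.degree v by omega)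
  have hsent : (G.degree v : ℝ) * ∑ u ∈ G.neighborFinset v,
      sentCharge (G.degree v) (G.degree u) ≤ G.degree v * (G.degree v - 9 / 2) := by
    rw [mul_sum, ← G.card_neighborFinset_eq_degree, ← nsmul_eq_mul]
    exact sum_le_card_nsmul _ _ _ fun u _ => mul_sentCharge_le hv _
  simp only [hreceived, zero_sub, sum_neg_distrib]
  linarith [le_of_mul_le_mul_left hsent hpos]

lemma half_mul_degree_le_sum_sentCharge {v : V} (hv : G.degree v < 5)
    (h : ∀ u, G.Adj v u → 9 ≤ G.degree u) :
    (G.degree v : ℝ) * (1 / 2) ≤ ∑ u ∈ G.neighborFinset v,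
      sentCharge (G.degree u) (G.degree v) := by
  rw [← card_neighborFinset_eq_degree, ← nsmul_eq_mul]
  refine card_nsmul_le_sum _ _ _ fun u hu => ?_
  simp [sentCharge, h u ((G.mem_neighborFinset v u).1 hu), hv.not_ge]

lemma card_mul_quarter_le_sum_sentCharge {v : V} (hv : G.degree v < 5) :
    #{u ∈ G.neighborFinset v | 5 < G.degree u} * (1 / 4 : ℝ) ≤ ∑ u ∈ G.neighborFinset v,
      sentCharge (G.degree u) (G.degree v) := by
  rw [← nsmul_eq_mul]
  refine (card_nsmul_le_sum _ _ _ fun u hu => ?_).trans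
    (sum_le_sum_of_subset_of_nonneg (filter_subset _ _) fun u _ _ => sentCharge_nonneg _ _)
  have hu : 6 ≤ G.degree u := (mem_filter.1 hu).2
  simp only [sentCharge, hv.not_ge, hu, if_false, if_true]
  split_ifs <;> norm_num

lemma MadLT.exists_reducible (hG : MadLT G (9 / 2)) (hne : G ≠ ⊥) :
    ∃ v ∈ G.support, G.degree v ≤ 2 ∨ (G.degree v = 3 ∧ ∃ u, G.Adj v u ∧ G.degree u ≤ 8) ∨
      (G.degree v = 4 ∧ #{u ∈ G.neighborFinset v | 5 < G.degree u} ≤ 1) := by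
  obtain ⟨v, hv, hcharge⟩ :=
    hG.exists_charge_lt hne fun a b => sentCharge (G.degree a) (G.degree b)
  refine ⟨v, hv, ?_⟩
  have hlt : G.degree v < 5 :=
    not_le.1 fun h => (nine_halves_le_charge_of_five_le_degree h).not_gt hcharge
  simp only [sentCharge_eq_zero_of_lt (show G.degree v < 6 by omega), sub_zero] at hcharge
  have hcases : G.degree v ≤ 2 ∨ G.degree v = 3 ∨ G.degree v = 4 := by omega
  refine hcases.imp_right (Or.imp (fun h3 => ⟨h3, ?_⟩) fun h4 => ⟨h4, ?_⟩)
  · by_contra! hnine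
    have hhalf := half_mul_degree_le_sum_sentCharge hlt hnine
    rw [h3] at hcharge hhalf
    norm_num at hcharge hhalf
    linarith
  · have hquarter := card_mul_quarter_le_sum_sentCharge hlt
    rw [h4] at hcharge hquarter
    push_cast at hcharge
    have : (#{u ∈ G.neighborFinset v | 5 < G.degree u} : ℝ) < 2 := by linarith
    exact Nat.le_of_lt_succ (by exact_mod_cast this)

end Discharging

theorem incidence_chromatic_mad_lt_nine_halves_general [Fintype V] [DecidableRel G.Adj]
    (hmad : MadLT G (9 / 2)) {k : ℕ} (hk : 9 ≤ k) (hΔ : G.maxDegree ≤ k) :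
    HasIncidenceColoring G (k + 4) 4 := by
  induction hn : #G.edgeFinset using Nat.strong_induction_on generalizing G with
  | _ n ih =>
    classical
    rcases eq_or_ne G ⊥ with rfl | hne
    · exact hasIncidenceColoring_bot _ _
    obtain ⟨v, ⟨w, hvw⟩, hred⟩ := hmad.exists_reducible hne
    have hlt : G.deleteIncidenceSet v < G := (G.deleteIncidenceSet_le v).lt_of_ne fun h =>
      (deleteIncidenceSet_adj.1 (h ▸ hvw)).2.1 rfl
    have h : HasIncidenceColoring (G.deleteIncidenceSet v) (k + 4) 4 :=
      ih _ (hn ▸ card_lt_card (edgeFinset_ssubset_edgeFinset.2 hlt)) (hmad.mono hlt.le)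
        ((maxDegree_mono hlt.le).trans hΔ) rfl
    rcases hred with h2 | ⟨h3, u, hvu, hu⟩ | ⟨h4, hheavy⟩
    · refine h.of_deleteIncidenceSet_of_degree_add_card_le hΔ (by omega) ?_
      have := card_filter_le (G.neighborFinset v) fun u => k < G.degree u + G.degree v
      rw [card_neighborFinset_eq_degree] at this
      omega
    · exact h.of_deleteIncidenceSet_of_degree_eq_three hΔ le_rfl h3 hvu (by omega)
    · refine h.of_deleteIncidenceSet_of_degree_add_card_le hΔ h4.le ?_
      rw [h4]
      refine Nat.add_le_add_left (le_trans (card_le_card ?_) hheavy) 4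
      exact monotone_filter_right _ fun u _ hu => by omega

end

theorem incidence_chromatic_mad_lt_nine_halves {V : Type*} [Fintype V] (G : SimpleGraph V)
    [DecidableRel G.Adj] (hmad : MadLT G (9 / 2)) (hΔ : 9 ≤ G.maxDegree) :
    incChromaticNumber G ≤ G.maxDegree + 4 :=
  (incidence_chromatic_mad_lt_nine_halves_general hmad hΔ le_rfl).incChromaticNumber_le
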